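/- For all y₁, y₂ ∈ ℝ^d, (1/σ_k²) ∬_{S^k×S^k} g(y₁,u₁,y₂,u₂) dν(u₁) dν(u₂) = 1 + c₁ C ∫_{ℝ^d} k₀₁(y₁−y') k₀₁(y₂−y') dy', where c₁ = (1/σ_k²) ∫_{S^k}∫_{S^k}∫_{S^k} k₀₂(d(u₁,u')) k₀₂(d(u₂,u')) dν(u₁) dν(u₂) dν(u') (equality holding in [0,∞]). In particular, the pair correlation function of the spatial components of the shot noise Cox process depends on the spherical kernel k₀₂ only through the constant c₁. -/

import Mathlib

open MeasureTheory Real Set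
open scoped ENNReal NNReal RealInnerProductSpace Classical

noncomputable section

/-- `d`-dimensional Euclidean space. -/
abbrev Eucl (d : ℕ) : Type := EuclideanSpace ℝ (Fin d)

/-- The unit `k`-sphere in `ℝ^{k+1}`. -/
abbrev Sph (k : ℕ) : Type := Metric.sphere (0 : EuclideanSpace ℝ (Fin (k+1))) 1

/-- The surface measure `ν` on the `k`-sphere: the `k`-dimensional Hausdorff measure. -/
noncomputable def sphMeasure (k : ℕ) : Measure (Sph k) := μH[k]

/-- The geodesic distance `d(u,v) = arccos ⟨u,v⟩` on the `k`-sphere. -/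
noncomputable def gd {k : ℕ} (u v : Sph k) : ℝ :=
  Real.arccos ⟪(u : EuclideanSpace ℝ (Fin (k+1))), (v : EuclideanSpace ℝ (Fin (k+1)))⟫

/-- The pair correlation function of a homogeneous shot noise Cox process on
`ℝ^d × S^k` with separable kernel `k₀₁ ⊗ k₀₂` and constant `C = m₂/(α m₁²)`. -/
noncomputable def sncpG {d k : ℕ} (C : ℝ≥0) (k₀₁ : Eucl d → ℝ≥0) (k₀₂ : ℝ → ℝ≥0)
    (y₁ : Eucl d) (u₁ : Sph k) (y₂ : Eucl d) (u₂ : Sph k) : ℝ≥0∞ :=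
  1 + (C : ℝ≥0∞) * ∫⁻ y', (∫⁻ u', ((k₀₁ (y₁ - y') : ℝ≥0∞) * (k₀₁ (y₂ - y') : ℝ≥0∞) *
    (k₀₂ (gd u₁ u') : ℝ≥0∞) * (k₀₂ (gd u₂ u') : ℝ≥0∞)) ∂(sphMeasure k))

/-!
The `n`-dimensional Hausdorff measure of the unit `n`-sphere is finite and nonzero because
stereographic projection and its inverse are `C¹`, hence locally Lipschitz, and so transport local
finiteness and positivity from the Haar measure `μH[n]` on a hyperplane. Given this, the separable
kernel splits `g = 1 + C A Φ(u₁, u₂)`, with `A` the spatial and `Φ` the spherical overlap integral,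
and averaging over `(u₁, u₂)` followed by Tonelli turns the mean of `Φ` into `c₁`.
-/

open Filter Function Metric Module Topology
open scoped EuclideanSpace

section LocallyLipschitz

variable {X Y : Type*} [EMetricSpace X] [MeasurableSpace X] [BorelSpace X]
  [EMetricSpace Y] [MeasurableSpace Y] [BorelSpace Y]
  {f : X → Y} {x : X} {t : Set X} {K : ℝ≥0} {r : ℝ}

lemma finiteAtFilter_nhds_hausdorffMeasure_of_lipschitzOnWith (hf : LipschitzOnWith K f t)
    (ht : t ∈ 𝓝 x) (hopen : 𝓝 (f x) ≤ map f (𝓝 x)) (hr : 0 ≤ r)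
    (hfin : (μH[r] : Measure X).FiniteAtFilter (𝓝 x)) :
    (μH[r] : Measure Y).FiniteAtFilter (𝓝 (f x)) := by
  obtain ⟨s, hs, hμs⟩ := hfin
  refine ⟨f '' (t ∩ s), hopen (image_mem_map (inter_mem ht hs)), ?_⟩
  calc μH[r] (f '' (t ∩ s))
      ≤ (K : ℝ≥0∞) ^ r * μH[r] (t ∩ s) :=
        (hf.mono inter_subset_left).hausdorffMeasure_image_le hr
    _ < ∞ := ENNReal.mul_lt_top (ENNReal.rpow_lt_top_of_nonneg hr ENNReal.coe_ne_top)
        ((measure_mono inter_subset_right).trans_lt hμs)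

lemma hausdorffMeasure_ne_zero_of_lipschitzOnWith [(μH[r] : Measure Y).IsOpenPosMeasure]
    (hf : LipschitzOnWith K f t) (ht : t ∈ 𝓝 x) (hopen : 𝓝 (f x) ≤ map f (𝓝 x)) (hr : 0 ≤ r)
    {s : Set X} (hs : s ∈ 𝓝 x) : μH[r] s ≠ 0 := by
  intro hs_null
  have image_pos : 0 < μH[r] (f '' (t ∩ s)) :=
    Measure.measure_pos_of_mem_nhds _ (hopen (image_mem_map (inter_mem ht hs)))
  refine image_pos.not_ge ?_
  calc μH[r] (f '' (t ∩ s))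
      ≤ (K : ℝ≥0∞) ^ r * μH[r] (t ∩ s) :=
        (hf.mono inter_subset_left).hausdorffMeasure_image_le hr
    _ = 0 := by rw [measure_mono_null inter_subset_right hs_null, mul_zero]

end LocallyLipschitz

section Sphere

variable {E : Type*} [NormedAddCommGroup E] [InnerProductSpace ℝ E]

lemma exists_lipschitzOnWith_stereographic_symm {v : E} (hv : ‖v‖ = 1) (w : (ℝ ∙ v)ᗮ) :
    ∃ K, ∃ t ∈ 𝓝 w, LipschitzOnWith K (stereographic hv).symm t := by
  have contDiff_symm : ContDiff ℝ 1 fun w : (ℝ ∙ v)ᗮ ↦ stereoInvFunAux v (w : E) :=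
    contDiff_stereoInvFunAux.comp (ℝ ∙ v)ᗮ.subtypeL.contDiff
  exact contDiff_symm.contDiffAt.exists_lipschitzOnWith

lemma exists_lipschitzOnWith_stereographic {v : E} (hv : ‖v‖ = 1) {u : sphere (0 : E) 1}
    (hu : u ∈ (stereographic hv).source) :
    ∃ K, ∃ t ∈ 𝓝 u, LipschitzOnWith K (stereographic hv) t := by
  have inner_ne_one : innerSL ℝ v (u : E) ≠ 1 := fun h ↦ hu <| Subtype.ext
    ((inner_eq_one_iff_of_norm_eq_one hv (norm_eq_of_mem_sphere u)).1 h).symm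
  have source_mem_nhds : {x : E | innerSL ℝ v x ≠ 1} ∈ 𝓝 (u : E) :=
    (innerSL ℝ v).continuous.continuousAt.eventually_ne inner_ne_one
  obtain ⟨K, t, ht, hK⟩ :=
    (contDiffOn_stereoToFun.contDiffAt source_mem_nhds).exists_lipschitzOnWith
  exact ⟨K, Subtype.val ⁻¹' t, continuous_subtype_val.continuousAt ht, fun _ hx _ hy ↦ hK hx hy⟩

lemma mem_source_stereographic_neg (u : sphere (0 : E) 1) :
    u ∈ (stereographic (norm_eq_of_mem_sphere (-u))).source := by
  rw [stereographic_source]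
  exact ne_neg_of_mem_unit_sphere ℝ u

variable [MeasurableSpace E] [BorelSpace E] {n : ℕ} [Fact (finrank ℝ E = n + 1)]

lemma isAddHaarMeasure_hausdorffMeasure_orthogonal_span_singleton {v : E} (hv : v ≠ 0) :
    (μH[n] : Measure (ℝ ∙ v)ᗮ).IsAddHaarMeasure := by
  have : FiniteDimensional ℝ E := .of_fact_finrank_eq_succ n
  rw [← Submodule.finrank_orthogonal_span_singleton (𝕜 := ℝ) (n := n) hv]
  infer_instance

instance isLocallyFiniteMeasure_hausdorffMeasure_sphere :
    IsLocallyFiniteMeasure (μH[n] : Measure (sphere (0 : E) 1)) where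
  finiteAtNhds u := by
    have := isAddHaarMeasure_hausdorffMeasure_orthogonal_span_singleton (n := n)
      (ne_zero_of_mem_unit_sphere (-u))
    let e := stereographic (norm_eq_of_mem_sphere (-u))
    have hu : u ∈ e.source := mem_source_stereographic_neg u
    obtain ⟨K, t, ht, hK⟩ := exists_lipschitzOnWith_stereographic_symm
      (norm_eq_of_mem_sphere (-u)) (e u)
    have : FiniteDimensional ℝ E := .of_fact_finrank_eq_succ n
    rw [← e.left_inv hu]
    exact finiteAtFilter_nhds_hausdorffMeasure_of_lipschitzOnWith hK ht
      (e.symm.map_nhds_eq (e.map_source hu)).ge n.cast_nonneg (Measure.finiteAt_nhds _ _)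

instance isOpenPosMeasure_hausdorffMeasure_sphere :
    (μH[n] : Measure (sphere (0 : E) 1)).IsOpenPosMeasure where
  open_pos U hU := by
    rintro ⟨u, huU⟩
    have := isAddHaarMeasure_hausdorffMeasure_orthogonal_span_singleton (n := n)
      (ne_zero_of_mem_unit_sphere (-u))
    let e := stereographic (norm_eq_of_mem_sphere (-u))
    have hu : u ∈ e.source := mem_source_stereographic_neg u
    obtain ⟨K, t, ht, hK⟩ := exists_lipschitzOnWith_stereographic _ hu
    exact hausdorffMeasure_ne_zero_of_lipschitzOnWith hK ht (e.map_nhds_eq hu).ge n.cast_nonneg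
      (hU.mem_nhds huU)

end Sphere

section Averaging

variable {α β γ : Type*} [MeasurableSpace α] [MeasurableSpace β] [MeasurableSpace γ]

instance neZero_measure_prod (μ : Measure α) (ν : Measure β) [SFinite ν] [NeZero μ] [NeZero ν] :
    NeZero (μ.prod ν) where
  out h := by
    have univ_null : μ univ * ν univ = 0 := by
      rw [← Measure.prod_prod, h, Measure.coe_zero, Pi.zero_apply]
    exact mul_ne_zero (NeZero.ne (μ univ)) (NeZero.ne (ν univ)) univ_null

lemma laverage_one_add_const_mul (μ : Measure α) [IsFiniteMeasure μ] [NeZero μ] (c : ℝ≥0∞)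
    {f : α → ℝ≥0∞} (hf : AEMeasurable f μ) :
    ⨍⁻ x, (1 + c * f x) ∂μ = 1 + c * ⨍⁻ x, f x ∂μ := by
  rw [laverage, lintegral_add_left measurable_const, lintegral_const_mul'' _ (hf.smul_measure _),
    ← laverage, ← laverage, laverage_one]

lemma lintegral_lintegral_div_measure_univ_sq (μ : Measure α) [SFinite μ] {f : α → α → ℝ≥0∞}
    (hf : AEMeasurable (uncurry f) (μ.prod μ)) :
    (∫⁻ x, ∫⁻ y, f x y ∂μ ∂μ) / μ univ ^ 2 = ⨍⁻ z, f z.1 z.2 ∂(μ.prod μ) := by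
  rw [laverage_eq, lintegral_lintegral hf, ← univ_prod_univ, Measure.prod_prod, sq]

lemma lintegral_lintegral_lintegral_rotate {μ : Measure α} {ν : Measure β} {ρ : Measure γ}
    [SFinite μ] [SFinite ν] [SFinite ρ] {f : α → β → γ → ℝ≥0∞}
    (hf : Measurable fun p : (α × β) × γ ↦ f p.1.1 p.1.2 p.2) :
    ∫⁻ x, ∫⁻ y, ∫⁻ z, f x y z ∂ρ ∂ν ∂μ = ∫⁻ z, ∫⁻ x, ∫⁻ y, f x y z ∂ν ∂μ ∂ρ := by
  calc ∫⁻ x, ∫⁻ y, ∫⁻ z, f x y z ∂ρ ∂ν ∂μ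
      = ∫⁻ p, ∫⁻ z, f p.1 p.2 z ∂ρ ∂(μ.prod ν) :=
        lintegral_lintegral hf.lintegral_prod_right'.aemeasurable
    _ = ∫⁻ z, ∫⁻ p, f p.1 p.2 z ∂(μ.prod ν) ∂ρ := lintegral_lintegral_swap hf.aemeasurable
    _ = ∫⁻ z, ∫⁻ x, ∫⁻ y, f x y z ∂ν ∂μ ∂ρ := lintegral_congr fun z ↦
        (lintegral_lintegral (f := fun x y ↦ f x y z)
          (hf.comp measurable_prodMk_right).aemeasurable).symm

end Averaging

section PairCorrelation

variable {Y U : Type*} [MeasurableSpace Y] [MeasurableSpace U]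

/-- The overlap integral `∫ κ(x₁, x') κ(x₂, x') dμ(x')` of a kernel `κ` seen from `x₁` and `x₂`:
up to a constant, the contribution of a common cluster centre to the pair correlation function of
a shot noise Cox process. -/
def kernelOverlap (μ : Measure Y) (κ : Y → Y → ℝ≥0∞) (x₁ x₂ : Y) : ℝ≥0∞ :=
  ∫⁻ x', κ x₁ x' * κ x₂ x' ∂μ

/-- The pair correlation function of a shot noise Cox process on a product `Y × U` with separable
kernel `h ⊗ κ` and cluster centres spread according to `μ ⊗ ν`. The kernels are functions of a point
and a centre, so that no group structure or distance is needed. -/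
def separablePairCorrelation (μ : Measure Y) (ν : Measure U) (C : ℝ≥0∞) (h : Y → Y → ℝ≥0∞)
    (κ : U → U → ℝ≥0∞) (y₁ : Y) (u₁ : U) (y₂ : Y) (u₂ : U) : ℝ≥0∞ :=
  1 + C * ∫⁻ y', ∫⁻ u', h y₁ y' * h y₂ y' * κ u₁ u' * κ u₂ u' ∂ν ∂μ

variable {μ : Measure Y} {ν : Measure U} {h : Y → Y → ℝ≥0∞} {κ : U → U → ℝ≥0∞} {y₁ y₂ : Y}

lemma measurable_kernel_mul_kernel (hκ : Measurable (uncurry κ)) :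
    Measurable fun p : (U × U) × U ↦ κ p.1.1 p.2 * κ p.1.2 p.2 :=
  (hκ.comp (measurable_fst.fst.prodMk measurable_snd)).mul
    (hκ.comp (measurable_fst.snd.prodMk measurable_snd))

lemma measurable_uncurry_kernelOverlap [SFinite ν] (hκ : Measurable (uncurry κ)) :
    Measurable (uncurry (kernelOverlap ν κ)) :=
  (measurable_kernel_mul_kernel hκ).lintegral_prod_right'

lemma separablePairCorrelation_eq_one_add_mul_kernelOverlap (C : ℝ≥0∞)
    (h₁ : AEMeasurable (h y₁) μ) (h₂ : AEMeasurable (h y₂) μ) {u₁ u₂ : U}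
    (hκ₁ : AEMeasurable (κ u₁) ν) (hκ₂ : AEMeasurable (κ u₂) ν) :
    separablePairCorrelation μ ν C h κ y₁ u₁ y₂ u₂ =
      1 + C * kernelOverlap μ h y₁ y₂ * kernelOverlap ν κ u₁ u₂ := by
  have tonelli := lintegral_lintegral_mul (h₁.mul h₂) (hκ₁.mul hκ₂)
  simp only [Pi.mul_apply] at tonelli
  simp only [separablePairCorrelation, kernelOverlap, mul_assoc C, ← tonelli, ← mul_assoc]

theorem sncp_spatial_pcf_general [IsFiniteMeasure ν] [NeZero ν] (C : ℝ≥0∞)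
    (h₁ : AEMeasurable (h y₁) μ) (h₂ : AEMeasurable (h y₂) μ) (hκ : Measurable (uncurry κ)) :
    (∫⁻ u₁, ∫⁻ u₂, separablePairCorrelation μ ν C h κ y₁ u₁ y₂ u₂ ∂ν ∂ν) / ν univ ^ 2 =
      1 + ((∫⁻ u', ∫⁻ u₁, ∫⁻ u₂, κ u₁ u' * κ u₂ u' ∂ν ∂ν ∂ν) / ν univ ^ 2) * C *
        ∫⁻ y', h y₁ y' * h y₂ y' ∂μ := by
  let A := kernelOverlap μ h y₁ y₂
  let Φ := kernelOverlap ν κ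
  have hΦ : Measurable (uncurry Φ) := measurable_uncurry_kernelOverlap hκ
  have hκ_section (u : U) : AEMeasurable (κ u) ν := (hκ.comp measurable_prodMk_left).aemeasurable
  calc (∫⁻ u₁, ∫⁻ u₂, separablePairCorrelation μ ν C h κ y₁ u₁ y₂ u₂ ∂ν ∂ν) / ν univ ^ 2
      = (∫⁻ u₁, ∫⁻ u₂, (1 + C * A * Φ u₁ u₂) ∂ν ∂ν) / ν univ ^ 2 := by
        simp only [A, Φ, separablePairCorrelation_eq_one_add_mul_kernelOverlap C h₁ h₂
          (hκ_section _) (hκ_section _)]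
    _ = ⨍⁻ p, (1 + C * A * Φ p.1 p.2) ∂(ν.prod ν) :=
        lintegral_lintegral_div_measure_univ_sq ν ((hΦ.const_mul _).const_add _).aemeasurable
    _ = 1 + C * A * ⨍⁻ p, Φ p.1 p.2 ∂(ν.prod ν) :=
        laverage_one_add_const_mul _ _ hΦ.aemeasurable
    _ = 1 + C * A * ((∫⁻ u₁, ∫⁻ u₂, Φ u₁ u₂ ∂ν ∂ν) / ν univ ^ 2) := by
        rw [lintegral_lintegral_div_measure_univ_sq ν hΦ.aemeasurable]
    _ = 1 + C * A * ((∫⁻ u', ∫⁻ u₁, ∫⁻ u₂, κ u₁ u' * κ u₂ u' ∂ν ∂ν ∂ν) / ν univ ^ 2) := by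
        rw [← lintegral_lintegral_lintegral_rotate (measurable_kernel_mul_kernel hκ)]
        rfl
    _ = _ := by
        simp only [A, kernelOverlap]
        ring

end PairCorrelation

lemma measurable_uncurry_gd (k : ℕ) : Measurable (uncurry (gd (k := k))) :=
  (Real.continuous_arccos.comp (by fun_prop)).measurable

instance isFiniteMeasure_sphMeasure (k : ℕ) : IsFiniteMeasure (sphMeasure k) :=
  inferInstanceAs (IsFiniteMeasure (μH[k] : Measure (Sph k)))

instance neZero_sphMeasure (k : ℕ) : NeZero (sphMeasure k) :=
  have : Nonempty (Sph k) := (NormedSpace.sphere_nonempty.2 zero_le_one).to_subtype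
  inferInstanceAs (NeZero (μH[k] : Measure (Sph k)))

/-- The pair correlation function of the spatial components of a shot noise Cox process
depends on the spherical kernel `k₀₂` only through the constant `c₁`. -/
theorem sncp_spatial_pcf (d k : ℕ) (hd : 1 ≤ d) (hk : 1 ≤ k)
    (C : ℝ≥0) (k₀₁ : Eucl d → ℝ≥0) (k₀₂ : ℝ → ℝ≥0)
    (hk₀₁ : Measurable k₀₁) (hk₀₂ : Measurable k₀₂) (y₁ y₂ : Eucl d) :
    (∫⁻ u₁, (∫⁻ u₂, sncpG C k₀₁ k₀₂ y₁ u₁ y₂ u₂ ∂(sphMeasure k)) ∂(sphMeasure k))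
        / (sphMeasure k Set.univ) ^ 2 =
      1 + ((∫⁻ u', (∫⁻ u₁, (∫⁻ u₂, ((k₀₂ (gd u₁ u') : ℝ≥0∞) * (k₀₂ (gd u₂ u') : ℝ≥0∞))
            ∂(sphMeasure k)) ∂(sphMeasure k)) ∂(sphMeasure k)) / (sphMeasure k Set.univ) ^ 2) *
        (C : ℝ≥0∞) * ∫⁻ y', ((k₀₁ (y₁ - y') : ℝ≥0∞) * (k₀₁ (y₂ - y') : ℝ≥0∞)) := by
  exact sncp_spatial_pcf_general (h := fun y y' ↦ (k₀₁ (y - y') : ℝ≥0∞)) C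
    (by fun_prop) (by fun_prop) (hk₀₂.comp (measurable_uncurry_gd k)).coe_nnreal_ennreal
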